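/- Fix an integer n ≥ 1. Suppose |ε_t| ≤ B almost surely and Var(ε_t | F_{t-1}) ≤ σ_t² for all 1 ≤ t ≤ n, with σ_t F_{t-1}-measurable and B > 0, and suppose Σ_{i=1}^n σ_i² ‖G_i‖² ≤ C_n² almost surely, where C_n > 0 is deterministic. Let h(u) = (1 + u) log(1 + u) − u. Then for every r ≥ 0, P( sup_{1 ≤ t ≤ n} ‖(ρI + V_t)^{-1/2} M_t‖ ≥ r ) ≤ 2 exp( − (C_n²/B²) h( B r / C_n² ) ). -/

import Mathlib

open MeasureTheory Filter Real
open scoped RealInnerProductSpace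

noncomputable def outerProd {H : Type*} [NormedAddCommGroup H] [InnerProductSpace ℝ H]
    (x : H) : H →L[ℝ] H :=
  (innerSL ℝ x).smulRight x

theorem aux_cosh_convex {u v w s : ℝ} (hv : 0 ≤ v) (hw : 0 ≤ w) (hs0 : 0 ≤ s) (hs1 : s ≤ 1)
    (hu : u ^ 2 = (1 - s) * v ^ 2 + s * w ^ 2) :
    Real.cosh u ≤ (1 - s) * Real.cosh v + s * Real.cosh w := by
  have h1 := Real.hasSum_cosh u
  have h2 := ((Real.hasSum_cosh v).mul_left (1 - s)).add ((Real.hasSum_cosh w).mul_left s)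
  refine hasSum_le (fun k => ?_) h1 h2
  have hc := (convexOn_pow (𝕜 := ℝ) k).2 (x := v ^ 2) (y := w ^ 2) (Set.mem_Ici.2 (sq_nonneg v))
    (Set.mem_Ici.2 (sq_nonneg w)) (sub_nonneg.2 hs1) hs0 (by ring)
  simp only [smul_eq_mul] at hc
  rw [← hu, ← pow_mul, ← pow_mul, ← pow_mul] at hc
  rw [← mul_div_assoc, ← mul_div_assoc, ← add_div]
  gcongr

theorem aux_scalar {a b : ℝ} (ha : 0 ≤ a) (hb : 0 ≤ b) (τ : ℝ) (hτ : |τ| ≤ 1) {u : ℝ}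
    (hu : u ^ 2 = a ^ 2 + 2 * (τ * a * b) + b ^ 2) :
    Real.cosh u ≤ Real.cosh a + τ * b * Real.sinh a + Real.cosh a * (Real.exp b - 1 - b) := by
  rw [abs_le] at hτ
  have h := aux_cosh_convex (u := u) (v := |a - b|) (w := a + b) (s := (1 + τ) / 2)
    (abs_nonneg _) (by positivity) (by linarith) (by linarith) (by rw [sq_abs, hu]; ring)
  rw [Real.cosh_abs, Real.cosh_add, Real.cosh_sub] at h
  have e : Real.exp b = Real.cosh b + Real.sinh b := (Real.cosh_add_sinh b).symm
  have h1 : b ≤ Real.sinh b := Real.self_le_sinh_iff.2 hb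
  have h2 : Real.sinh a ≤ Real.cosh a := (Real.sinh_lt_cosh a).le
  have h3 : 0 ≤ Real.sinh a := Real.sinh_nonneg_iff.2 ha
  rw [e]
  have h4 : τ * Real.sinh a ≤ Real.cosh a := by nlinarith
  nlinarith [mul_le_mul_of_nonneg_right h4 (sub_nonneg.2 h1)]

theorem aux_pinelis {H : Type*} [NormedAddCommGroup H] [InnerProductSpace ℝ H] (x d : H) :
    Real.cosh ‖x + d‖ ≤ Real.cosh ‖x‖ + Real.sinh ‖x‖ / ‖x‖ * ⟪x, d⟫ +
      Real.cosh ‖x‖ * (Real.exp ‖d‖ - 1 - ‖d‖) := by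
  have hc : |⟪x, d⟫| ≤ ‖x‖ * ‖d‖ := abs_real_inner_le_norm x d
  have hn := norm_add_sq_real x d
  by_cases h0 : ‖x‖ * ‖d‖ = 0
  · rw [h0] at hc
    have h00 : ⟪x, d⟫ = 0 := abs_nonpos_iff.1 hc
    have := aux_scalar (norm_nonneg x) (norm_nonneg d) 0 (by simp) (u := ‖x + d‖)
      (by rw [hn, h00]; ring)
    rw [h00]; linarith
  · have hx : ‖x‖ ≠ 0 := left_ne_zero_of_mul h0
    have hd : ‖d‖ ≠ 0 := right_ne_zero_of_mul h0
    have hp : 0 < ‖x‖ * ‖d‖ := by positivity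
    have := aux_scalar (norm_nonneg x) (norm_nonneg d) (⟪x, d⟫ / (‖x‖ * ‖d‖))
      (by rw [abs_div, abs_of_pos hp]; exact (div_le_one hp).2 hc) (u := ‖x + d‖)
      (by rw [hn]; field_simp)
    refine this.trans (le_of_eq ?_)
    field_simp

theorem aux_exp {y Y : ℝ} (hy : 0 ≤ y) (hyY : y ≤ Y) (s : ℝ) (hs : y = s * Y) (hs0 : 0 ≤ s):
    Real.exp y - 1 - y ≤ s ^ 2 * (Real.exp Y - 1 - Y) := by
  have key : ∀ z : ℝ, HasSum (fun k : ℕ => z ^ (k + 2) / (k + 2).factorial)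
      (Real.exp z - 1 - z) := by
    intro z
    have h : HasSum (fun k : ℕ => z ^ k / k.factorial) (Real.exp z) := by
      rw [Real.exp_eq_exp_ℝ]; exact NormedSpace.expSeries_div_hasSum_exp z
    have := (hasSum_nat_add_iff' 2).2 h
    simpa [Finset.sum_range_succ, sub_sub] using this
  refine hasSum_le (fun k => ?_) (key y) ((key Y).mul_left (s ^ 2))
  rw [← mul_div_assoc]
  gcongr
  calc y ^ (k + 2) = y ^ k * y ^ 2 := by ring
    _ ≤ Y ^ k * y ^ 2 := by gcongr
    _ = s ^ 2 * Y ^ (k + 2) := by rw [hs]; ring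

section ops
variable {H : Type*} [NormedAddCommGroup H] [InnerProductSpace ℝ H] [CompleteSpace H]

theorem aux_symm {Q R : H →L[ℝ] H} (hQ : Q.IsPositive)
    (h : R ∘L Q = 1 ∧ Q ∘L R = 1) (x y : H) : ⟪R x, y⟫ = ⟪x, R y⟫ := by
  have h2 : ∀ z, Q (R z) = z := fun z => by
    have := congrArg (fun T : H →L[ℝ] H => T z) h.2; simpa using this
  have hs : ∀ u v, ⟪Q u, v⟫ = ⟪u, Q v⟫ := fun u v => hQ.isSymmetric u v
  calc ⟪R x, y⟫ = ⟪R x, Q (R y)⟫ := by rw [h2]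
    _ = ⟪Q (R x), R y⟫ := (hs _ _).symm
    _ = _ := by rw [h2]

theorem aux_inner_inv {Q R A : H →L[ℝ] H} (hQ : Q.IsPositive)
    (h : R ∘L Q = 1 ∧ Q ∘L R = 1) (hA : Q ∘L Q = A) (x y : H) :
    ⟪R x, R y⟫ = ⟪x, Ring.inverse A y⟫ := by
  have e : Ring.inverse A = R * R := by
    have h1 : R * Q = 1 := h.1
    have h2 : Q * R = 1 := h.2
    have hA' : A = Q * Q := hA.symm
    have a1 : A * (R * R) = 1 := by
      rw [hA', mul_assoc, ← mul_assoc Q R R, h2, one_mul, h2]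
    have a2 : (R * R) * A = 1 := by
      rw [hA', mul_assoc, ← mul_assoc R Q Q, h1, one_mul, h1]
    exact Ring.inverse_unit (⟨A, R * R, a1, a2⟩ : (H →L[ℝ] H)ˣ)
  rw [e, aux_symm hQ h]; rfl

theorem aux_isUnit {Q R A : H →L[ℝ] H} 
    (h : R ∘L Q = 1 ∧ Q ∘L R = 1) (hA : Q ∘L Q = A) : IsUnit A := by
  have : IsUnit Q := ⟨⟨Q, R, h.2, h.1⟩, rfl⟩
  rw [← hA]; exact this.mul this

theorem aux_mono {Q R Q' R' : H →L[ℝ] H} (hQ : Q.IsPositive) (hQ' : Q'.IsPositive)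
    (h : R ∘L Q = 1 ∧ Q ∘L R = 1) (h' : R' ∘L Q' = 1 ∧ Q' ∘L R' = 1) (z : H)
    (hA : Q' ∘L Q' = Q ∘L Q + outerProd z) (x : H) : ‖R' x‖ ≤ ‖R x‖ := by
  have h2 : ∀ z, Q (R z) = z := fun z => by
    have := congrArg (fun T : H →L[ℝ] H => T z) h.2; simpa using this
  have h2' : ∀ z, Q' (R' z) = z := fun z => by
    have := congrArg (fun T : H →L[ℝ] H => T z) h'.2; simpa using this
  have hs : ∀ u v, ⟪Q u, v⟫ = ⟪u, Q v⟫ := fun u v => hQ.isSymmetric u v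
  set y := R' (R' x) with hy
  have e1 : ‖R' x‖ ^ 2 = ⟪x, y⟫ := by
    rw [← real_inner_self_eq_norm_sq, aux_symm hQ' h']
  have e2 : ⟪x, y⟫ ≤ ‖R x‖ * ‖Q y‖ := by
    have : ⟪x, y⟫ = ⟪R x, Q y⟫ := by rw [← hs, h2]
    rw [this]; exact real_inner_le_norm _ _
  have e3 : ‖Q y‖ ^ 2 ≤ ‖R' x‖ ^ 2 := by
    have hx : x = Q (Q y) + ⟪z, y⟫ • z := by
      have := congrArg (fun T : H →L[ℝ] H => T y) hA
      simp only [outerProd, ContinuousLinearMap.comp_apply, add_apply,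
        ContinuousLinearMap.smulRight_apply, innerSL_apply_apply, hy, h2'] at this
      exact this
    have : ⟪x, y⟫ = ‖Q y‖ ^ 2 + ⟪z, y⟫ ^ 2 := by
      conv_lhs => rw [hx]
      rw [inner_add_left, hs, real_inner_self_eq_norm_sq, inner_smul_left]
      simp; ring
    rw [e1, this]; nlinarith [sq_nonneg ⟪z, y⟫]
  have e4 : ‖Q y‖ ≤ ‖R' x‖ := by
    exact (sq_le_sq₀ (norm_nonneg _) (norm_nonneg _)).1 e3
  by_contra hlt
  push Not at hlt
  nlinarith [norm_nonneg (R x), norm_nonneg (Q y)]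

theorem aux_le_one {Q R Q' R' : H →L[ℝ] H} (hQ : Q.IsPositive) (hQ' : Q'.IsPositive)
    (h' : R' ∘L Q' = 1 ∧ Q' ∘L R' = 1) (z : H)
    (hA : Q' ∘L Q' = Q ∘L Q + outerProd z) : ‖R' z‖ ≤ 1 := by
  have h2' : ∀ z, Q' (R' z) = z := fun z => by
    have := congrArg (fun T : H →L[ℝ] H => T z) h'.2; simpa using this
  have hs : ∀ u v, ⟪Q u, v⟫ = ⟪u, Q v⟫ := fun u v => hQ.isSymmetric u v
  set y := R' (R' z) with hy
  have e1 : ‖R' z‖ ^ 2 = ⟪z, y⟫ := by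
    rw [← real_inner_self_eq_norm_sq, aux_symm hQ' h']
  have hx : z = Q (Q y) + ⟪z, y⟫ • z := by
    have := congrArg (fun T : H →L[ℝ] H => T y) hA
    simp only [outerProd, ContinuousLinearMap.comp_apply, add_apply,
      ContinuousLinearMap.smulRight_apply, innerSL_apply_apply, hy, h2'] at this
    exact this
  have e : ⟪z, y⟫ = ‖Q y‖ ^ 2 + ⟪z, y⟫ ^ 2 := by
    have := congrArg (fun w => ⟪w, y⟫) hx
    have hq : ⟪Q (Q y), y⟫ = ‖Q y‖ ^ 2 := by rw [hs, real_inner_comm, hs, real_inner_comm,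
      ← real_inner_self_eq_norm_sq, hs]
    simp only [inner_add_left, hq, inner_smul_left] at this
    simp only [conj_trivial] at this
    linarith
  by_contra hlt
  push Not at hlt
  have : 1 < ⟪z, y⟫ := by rw [← e1]; nlinarith
  nlinarith [sq_nonneg ‖Q y‖]

theorem aux_meas_inv {Ω : Type*} {m : MeasurableSpace Ω} {A : Ω → H →L[ℝ] H}
    (hA : StronglyMeasurable A) (hu : ∀ ω, IsUnit (A ω)) :
    StronglyMeasurable (fun ω => Ring.inverse (A ω)) := by
  refine stronglyMeasurable_of_tendsto (ι := ℕ) atTop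
    (f := fun n ω => Ring.inverse (hA.approx n ω)) (fun n => ?_) ?_
  · exact ((hA.approx n).map Ring.inverse).stronglyMeasurable
  · rw [tendsto_pi_nhds]
    intro ω
    obtain ⟨u, hu⟩ := hu ω
    have := NormedRing.inverse_continuousAt u
    rw [hu] at this
    exact this.tendsto.comp (hA.tendsto_approx ω)

theorem aux_outer_cont : Continuous (outerProd : H → H →L[ℝ] H) := by
  unfold outerProd
  have : Continuous (fun x : H => (ContinuousLinearMap.smulRightL ℝ H H (innerSL ℝ x)) x) := by
    fun_prop
  exact this

theorem aux_meas_A {Ω : Type*} {m : MeasurableSpace Ω} {X : ℕ → Ω → H} {ρ : ℝ} {t : ℕ}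
    (hX : ∀ i, 1 ≤ i → i ≤ t → StronglyMeasurable (X i))
    (hu : ∀ ω, IsUnit (ρ • (1 : H →L[ℝ] H) + ∑ i ∈ Finset.Icc 1 t, outerProd (X i ω))) :
    StronglyMeasurable (fun ω =>
      Ring.inverse (ρ • (1 : H →L[ℝ] H) + ∑ i ∈ Finset.Icc 1 t, outerProd (X i ω))) := by
  refine aux_meas_inv ?_ hu
  refine stronglyMeasurable_const.add (Finset.stronglyMeasurable_fun_sum _ fun i hi => ?_)
  rw [Finset.mem_Icc] at hi
  exact aux_outer_cont.comp_stronglyMeasurable (hX i hi.1 hi.2)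

end ops

theorem aux_step {Ω : Type*} {m m0 : MeasurableSpace Ω} (hm : m ≤ m0) {μ : Measure Ω}
    [IsProbabilityMeasure μ] {e W P K R s U : Ω → ℝ} {B c : ℝ}
    (he : Integrable e μ) (he0 : μ[e | m] =ᵐ[μ] 0) (heB : ∀ᵐ ω ∂μ, |e ω| ≤ B)
    (hvar : μ[fun ω => e ω ^ 2 | m] ≤ᵐ[μ] s)
    (hP : StronglyMeasurable[m] P) (hK : StronglyMeasurable[m] K) (hR : StronglyMeasurable[m] R)
    (hPc : ∀ᵐ ω ∂μ, ‖P ω‖ ≤ c) (hKc : ∀ᵐ ω ∂μ, ‖K ω‖ ≤ c) (hRc : ∀ᵐ ω ∂μ, ‖R ω‖ ≤ c)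
    (hR0 : ∀ ω, 0 ≤ R ω) (hW : Integrable W μ) (hU : Integrable U μ)
    (hWle : ∀ᵐ ω ∂μ, W ω ≤ P ω + K ω * e ω + R ω * e ω ^ 2)
    (hUle : ∀ᵐ ω ∂μ, P ω + R ω * s ω ≤ U ω) {A : Set Ω} (hA : MeasurableSet[m] A) :
    ∫ ω in A, W ω ∂μ ≤ ∫ ω in A, U ω ∂μ := by
  have he2 : Integrable (fun ω => e ω ^ 2) μ := by
    refine Integrable.of_bound (he.1.pow 2) (B ^ 2) ?_
    filter_upwards [heB] with ω h
    rw [Real.norm_eq_abs, abs_pow]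
    gcongr
  have iP : Integrable P μ := Integrable.of_bound (hP.mono hm).aestronglyMeasurable c hPc
  have iK : Integrable (K * e) μ := he.bdd_mul (hK.mono hm).aestronglyMeasurable hKc
  have iR : Integrable (R * fun ω => e ω ^ 2) μ :=
    he2.bdd_mul (hR.mono hm).aestronglyMeasurable hRc
  have iT := (iP.add iK).add iR
  calc ∫ ω in A, W ω ∂μ ≤ ∫ ω in A, (P + K * e + R * fun ω => e ω ^ 2) ω ∂μ :=
        integral_mono_ae hW.integrableOn iT.integrableOn (ae_restrict_of_ae hWle)
    _ = ∫ ω in A, (μ[P + K * e + R * fun ω => e ω ^ 2 | m]) ω ∂μ :=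
        (setIntegral_condExp hm iT hA).symm
    _ ≤ ∫ ω in A, U ω ∂μ := by
        refine integral_mono_ae integrable_condExp.integrableOn hU.integrableOn
          (ae_restrict_of_ae ?_)
        have c1 := condExp_add (iP.add iK) iR m
        have c2 := condExp_add iP iK m
        have c3 := condExp_mul_of_stronglyMeasurable_left hK iK he
        have c4 := condExp_mul_of_stronglyMeasurable_left hR iR he2
        have c5 := condExp_of_stronglyMeasurable hm hP iP
        filter_upwards [c1, c2, c3, c4, he0, hvar, hUle] with ω c1 c2 c3 c4 h0 hv hu
        rw [c1, Pi.add_apply, c2, Pi.add_apply, c3, c4, c5, Pi.mul_apply, Pi.mul_apply, h0]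
        have := mul_le_mul_of_nonneg_left hv (hR0 ω)
        simp only [Pi.zero_apply, mul_zero, add_zero]
        linarith

theorem aux_maximal {Ω : Type*} {m0 : MeasurableSpace Ω} {μ : Measure Ω}
    [IsProbabilityMeasure μ] (ℱ : Filtration ℕ m0) (n : ℕ) (Z : ℕ → Ω → ℝ) (E : ℕ → Set Ω)
    (hZi : ∀ t ≤ n, Integrable (Z t) μ) (hZ0 : ∀ t ω, 0 ≤ Z t ω)
    (hE : ∀ t ≤ n, MeasurableSet[ℱ t] (E t)) (θ : ℝ)
    (hθ : ∀ t ≤ n, ∀ᵐ ω ∂μ, ω ∈ E t → θ ≤ Z t ω)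
    (hstep : ∀ t < n, ∀ A, MeasurableSet[ℱ t] A →
      ∫ ω in A, Z (t + 1) ω ∂μ ≤ ∫ ω in A, Z t ω ∂μ) :
    θ * μ.real {ω | ∃ t ≤ n, ω ∈ E t} ≤ ∫ ω, Z 0 ω ∂μ := by
  set S : ℕ → Set Ω := fun k => {ω | ∃ t ≤ k, ω ∈ E t} with hS
  have hSm : ∀ k ≤ n, MeasurableSet[ℱ k] (S k) := by
    intro k hk
    have : S k = ⋃ t ∈ Finset.range (k + 1), E t := by
      ext ω; simp [hS, Nat.lt_succ_iff]
    rw [this]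
    refine Finset.measurableSet_biUnion _ fun t ht => ?_
    have ht' : t ≤ k := Nat.lt_succ_iff.1 (Finset.mem_range.1 ht)
    exact ℱ.mono ht' _ (hE t (ht'.trans hk))
  have hsplit : ∀ k ≤ n, ∀ A, MeasurableSet A →
      ∫ ω in A \ E k, Z k ω ∂μ + θ * μ.real (A ∩ E k) ≤ ∫ ω in A, Z k ω ∂μ := by
    intro k hk A hA
    have hEm := ℱ.le k _ (hE k hk)
    have hd := integral_inter_add_diff (s := A) hEm (hZi k hk).integrableOn
    have : ∫ ω in A ∩ E k, θ ∂μ ≤ ∫ ω in A ∩ E k, Z k ω ∂μ := by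
      refine setIntegral_mono_on_ae (integrable_const θ).integrableOn (hZi k hk).integrableOn
        (hA.inter hEm) ?_
      filter_upwards [hθ k hk] with ω h hω using h hω.2
    have hc : ∫ ω in A ∩ E k, θ ∂μ = θ * μ.real (A ∩ E k) := by simp [mul_comm]
    rw [hc] at this
    linarith
  have key : ∀ k ≤ n, ∫ ω in (S k)ᶜ, Z k ω ∂μ + θ * μ.real (S k) ≤ ∫ ω, Z 0 ω ∂μ := by
    intro k
    induction k with
    | zero =>
      intro hk
      have := hsplit 0 hk Set.univ MeasurableSet.univ
      have e : S 0 = E 0 := by ext ω; simp [hS]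
      rw [e]
      simpa [Set.compl_eq_univ_sdiff] using this
    | succ k ih =>
      intro hk
      have h1 := ih (by omega)
      have h2 := hstep k (by omega) _ (hSm k (by omega)).compl
      have h3 := hsplit (k + 1) hk (S k)ᶜ (ℱ.le k _ (hSm k (by omega))).compl
      have e : S (k + 1) = S k ∪ E (k + 1) := by
        ext ω
        simp only [hS, Set.mem_ofPred_eq, Set.mem_union]
        constructor
        · rintro ⟨t, ht, h⟩
          rcases Nat.le_succ_iff.1 ht with h' | h'
          · exact Or.inl ⟨t, h', h⟩
          · subst h'; exact Or.inr h
        · rintro (⟨t, ht, h⟩ | h)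
          · exact ⟨t, by omega, h⟩
          · exact ⟨k + 1, le_rfl, h⟩
      have e1 : (S (k + 1))ᶜ = (S k)ᶜ \ E (k + 1) := by
        rw [e, Set.compl_union]; rfl
      have e2 : μ.real (S (k + 1)) = μ.real (S k) + μ.real ((S k)ᶜ ∩ E (k + 1)) := by
        have : S (k + 1) = S k ∪ ((S k)ᶜ ∩ E (k + 1)) := by
          rw [e]; ext ω; simp only [Set.mem_union, Set.mem_inter_iff, Set.mem_compl_iff]; tauto
        rw [this, measureReal_union]
        · exact Set.disjoint_left.2 fun ω h h' => h'.1 h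
        · exact (ℱ.le k _ (hSm k (by omega))).compl.inter (ℱ.le _ _ (hE (k + 1) hk))
      rw [e1, e2, mul_add]
      linarith
  have := key n le_rfl
  have h0 : 0 ≤ ∫ ω in (S n)ᶜ, Z n ω ∂μ := integral_nonneg (hZ0 n)
  linarith

theorem aux_meas_inner {H : Type*} [NormedAddCommGroup H] [InnerProductSpace ℝ H]
    [CompleteSpace H] {Ω : Type*} {m : MeasurableSpace Ω} {X : ℕ → Ω → H} {ρ : ℝ} {t : ℕ}
    (hX : ∀ i, 1 ≤ i → i ≤ t → StronglyMeasurable (X i)) {Q R : Ω → H →L[ℝ] H}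
    (hQpos : ∀ ω, (Q ω).IsPositive)
    (hQsq : ∀ ω, Q ω ∘L Q ω =
      ρ • (1 : H →L[ℝ] H) + ∑ i ∈ Finset.Icc 1 t, outerProd (X i ω))
    (hQinv : ∀ ω, R ω ∘L Q ω = 1 ∧ Q ω ∘L R ω = 1) {u v : Ω → H}
    (hu : StronglyMeasurable u) (hv : StronglyMeasurable v) :
    StronglyMeasurable (fun ω => ⟪R ω (u ω), R ω (v ω)⟫) := by
  simp_rw [fun ω => aux_inner_inv (hQpos ω) (hQinv ω) (hQsq ω)]
  have := aux_meas_A hX (fun ω => aux_isUnit (hQinv ω) (hQsq ω))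
  exact hu.inner ((isBoundedBilinearMap_apply (𝕜 := ℝ)).continuous.comp_stronglyMeasurable
    (this.prodMk hv))

theorem aux_meas_norm {H : Type*} [NormedAddCommGroup H] [InnerProductSpace ℝ H]
    [CompleteSpace H] {Ω : Type*} {m : MeasurableSpace Ω} {X : ℕ → Ω → H} {ρ : ℝ} {t : ℕ}
    (hX : ∀ i, 1 ≤ i → i ≤ t → StronglyMeasurable (X i)) {Q R : Ω → H →L[ℝ] H}
    (hQpos : ∀ ω, (Q ω).IsPositive)
    (hQsq : ∀ ω, Q ω ∘L Q ω =
      ρ • (1 : H →L[ℝ] H) + ∑ i ∈ Finset.Icc 1 t, outerProd (X i ω))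
    (hQinv : ∀ ω, R ω ∘L Q ω = 1 ∧ Q ω ∘L R ω = 1) {u : Ω → H}
    (hu : StronglyMeasurable u) :
    StronglyMeasurable (fun ω => ‖R ω (u ω)‖) := by
  simp_rw [norm_eq_sqrt_real_inner]
  exact Real.continuous_sqrt.comp_stronglyMeasurable
    (aux_meas_inner hX hQpos hQsq hQinv hu hu)

/-- Pointwise one-step bound. -/
theorem aux_point {H : Type*} [NormedAddCommGroup H] [InnerProductSpace ℝ H]
    (x g : H) (l B e : ℝ) (hl : 0 ≤ l) (hB : 0 < B) (he : |e| ≤ B) (hg : ‖g‖ ≤ 1) :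
    Real.cosh (l * ‖x + e • g‖) ≤ Real.cosh (l * ‖x‖) +
      (Real.sinh (l * ‖x‖) / (l * ‖x‖) * (l ^ 2 * ⟪x, g⟫)) * e +
      ((Real.exp (l * B) - 1 - l * B) / B ^ 2 * Real.cosh (l * ‖x‖) * ‖g‖ ^ 2) * e ^ 2 := by
  have h := aux_pinelis (l • x) ((l * e) • g)
  have e1 : l • x + (l * e) • g = l • (x + e • g) := by rw [smul_add, smul_smul]
  rw [e1, norm_smul, norm_smul, norm_smul, Real.norm_eq_abs, Real.norm_eq_abs, abs_mul,
    abs_of_nonneg hl, inner_smul_left, inner_smul_right] at h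
  simp only [conj_trivial] at h
  have h2 := aux_exp (y := l * |e| * ‖g‖) (Y := l * B) (by positivity)
    (by
      calc l * |e| * ‖g‖ ≤ l * B * 1 := by gcongr
        _ = l * B := by ring) (|e| * ‖g‖ / B) (by field_simp) (by positivity)
  have h3 : (|e| * ‖g‖ / B) ^ 2 = e ^ 2 * ‖g‖ ^ 2 / B ^ 2 := by
    rw [div_pow, mul_pow, sq_abs]
  rw [h3] at h2
  have h4 := mul_le_mul_of_nonneg_left h2 (Real.cosh_pos (l * ‖x‖)).le
  refine h.trans ((add_le_add_right h4 _).trans (le_of_eq ?_))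
  ring

theorem aux_Kbound {H : Type*} [NormedAddCommGroup H] [InnerProductSpace ℝ H]
    (x g : H) (l : ℝ) (hl : 0 ≤ l) (hg : ‖g‖ ≤ 1) :
    |Real.sinh (l * ‖x‖) / (l * ‖x‖) * (l ^ 2 * ⟪x, g⟫)| ≤ Real.cosh (l * ‖x‖) * l := by
  have hc := abs_real_inner_le_norm x g
  have hs : 0 ≤ Real.sinh (l * ‖x‖) := Real.sinh_nonneg_iff.2 (by positivity)
  have hsc : Real.sinh (l * ‖x‖) ≤ Real.cosh (l * ‖x‖) := (Real.sinh_lt_cosh _).le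
  rw [abs_mul, abs_mul, abs_of_nonneg (by positivity : 0 ≤ Real.sinh (l * ‖x‖) / (l * ‖x‖)),
    abs_of_nonneg (by positivity : 0 ≤ l ^ 2)]
  by_cases h0 : l * ‖x‖ = 0
  · rw [h0]; simp [hl]
  · have hp : 0 < l * ‖x‖ := by positivity
    calc Real.sinh (l * ‖x‖) / (l * ‖x‖) * (l ^ 2 * |⟪x, g⟫|)
        ≤ Real.sinh (l * ‖x‖) / (l * ‖x‖) * (l ^ 2 * (‖x‖ * 1)) := by
          gcongr; exact hc.trans (by gcongr)
      _ = Real.sinh (l * ‖x‖) / (l * ‖x‖) * (l * ‖x‖) * l := by ring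
      _ = Real.sinh (l * ‖x‖) * l := by rw [div_mul_cancel₀ _ h0]
      _ ≤ _ := by gcongr

theorem stmt_6
    {H : Type*} [NormedAddCommGroup H] [InnerProductSpace ℝ H] [CompleteSpace H]
    [SecondCountableTopology H]
    {Ω : Type*} {m0 : MeasurableSpace Ω} {μ : Measure Ω} [IsProbabilityMeasure μ]
    (ℱ : Filtration ℕ m0)
    (X : ℕ → Ω → H) (ε : ℕ → Ω → ℝ)
    (hX : ∀ t, 1 ≤ t → StronglyMeasurable[ℱ (t - 1)] (X t))
    (hεmeas : ∀ t, 1 ≤ t → StronglyMeasurable[ℱ t] (ε t))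
    (hεint : ∀ t, 1 ≤ t → Integrable (ε t) μ)
    (hε0 : ∀ t, 1 ≤ t → μ[ε t | ℱ (t - 1)] =ᵐ[μ] 0)
    (ρ : ℝ) (hρ : 0 < ρ)
    (Q Qinv : ℕ → Ω → H →L[ℝ] H)
    (hQpos : ∀ t ω, (Q t ω).IsPositive)
    (hQsq : ∀ t ω, Q t ω ∘L Q t ω =
      ρ • (1 : H →L[ℝ] H) + ∑ i ∈ Finset.Icc 1 t, outerProd (X i ω))
    (hQinv : ∀ t ω, Qinv t ω ∘L Q t ω = 1 ∧ Q t ω ∘L Qinv t ω = 1)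
    (n : ℕ) (hn : 1 ≤ n)
    (B : ℝ) (hB : 0 < B) (σ : ℕ → Ω → ℝ)
    (hσmeas : ∀ t, 1 ≤ t → t ≤ n → StronglyMeasurable[ℱ (t - 1)] (σ t))
    (hbdd : ∀ t, 1 ≤ t → t ≤ n → ∀ᵐ ω ∂μ, |ε t ω| ≤ B)
    (hvar : ∀ t, 1 ≤ t → t ≤ n →
      μ[fun ω => (ε t ω - (μ[ε t | ℱ (t - 1)]) ω) ^ 2 | ℱ (t - 1)] ≤ᵐ[μ]
        fun ω => σ t ω ^ 2)
    (C : ℝ) (hC : 0 < C)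
    (hCn : ∀ᵐ ω ∂μ, ∑ i ∈ Finset.Icc 1 n, σ i ω ^ 2 * ‖Qinv i ω (X i ω)‖ ^ 2 ≤ C ^ 2)
    (r : ℝ) (hr : 0 ≤ r) :
    μ {ω | ∃ t, 1 ≤ t ∧ t ≤ n ∧
        r ≤ ‖Qinv t ω (∑ i ∈ Finset.Icc 1 t, ε i ω • X i ω)‖} ≤
      ENNReal.ofReal (2 * Real.exp (-(C ^ 2 / B ^ 2) *
        ((1 + B * r / C ^ 2) * Real.log (1 + B * r / C ^ 2) - B * r / C ^ 2))) := by
  have hXm : ∀ t i, 1 ≤ i → i ≤ t + 1 → StronglyMeasurable[ℱ t] (X i) := fun t i h1 h2 =>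
    (hX i h1).mono (ℱ.mono (by omega))
  set N : ℕ → Ω → H := fun t ω => ∑ i ∈ Finset.Icc 1 t, ε i ω • X i ω with hN
  have hNm : ∀ t, StronglyMeasurable[ℱ t] (N t) := by
    intro t
    refine Finset.stronglyMeasurable_fun_sum _ fun i hi => ?_
    rw [Finset.mem_Icc] at hi
    exact ((hεmeas i hi.1).mono (ℱ.mono hi.2)).smul (hXm t i hi.1 (by omega))
  have hsucc : ∀ t ω, Q (t + 1) ω ∘L Q (t + 1) ω = Q t ω ∘L Q t ω + outerProd (X (t + 1) ω) := by
    intro t ω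
    rw [hQsq, hQsq, Finset.sum_Icc_succ_top (by omega), add_assoc]
  have hNs : ∀ t ω, N (t + 1) ω = N t ω + ε (t + 1) ω • X (t + 1) ω := by
    intro t ω
    simp only [hN]
    rw [Finset.sum_Icc_succ_top (by omega)]
  have hYs : ∀ t ω, Qinv (t + 1) ω (N (t + 1) ω) =
      Qinv (t + 1) ω (N t ω) + ε (t + 1) ω • Qinv (t + 1) ω (X (t + 1) ω) := by
    intro t ω
    rw [hNs, map_add, map_smul]
  have hmono : ∀ t ω x, ‖Qinv (t + 1) ω x‖ ≤ ‖Qinv t ω x‖ := fun t ω x =>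
    aux_mono (hQpos t ω) (hQpos (t + 1) ω) (hQinv t ω) (hQinv (t + 1) ω) _ (hsucc t ω) x
  have hg1 : ∀ t ω, ‖Qinv (t + 1) ω (X (t + 1) ω)‖ ≤ 1 := fun t ω =>
    aux_le_one (R := Qinv t ω) (hQpos t ω) (hQpos (t + 1) ω) (hQinv (t + 1) ω) _ (hsucc t ω)
  have hYb : ∀ t ≤ n, ∀ᵐ ω ∂μ, ‖Qinv t ω (N t ω)‖ ≤ t * B := by
    intro t
    induction t with
    | zero => intro _; exact Eventually.of_forall fun ω => by simp [hN]
    | succ t ih =>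
      intro ht
      filter_upwards [ih (by omega), hbdd (t + 1) (by omega) ht] with ω h1 h2
      rw [hYs]
      refine (norm_add_le _ _).trans ?_
      rw [norm_smul, Real.norm_eq_abs]
      have h3 := hmono t ω (N t ω)
      have h4 : |ε (t + 1) ω| * ‖Qinv (t + 1) ω (X (t + 1) ω)‖ ≤ B * 1 := by
        gcongr; exact hg1 t ω
      push_cast
      linarith
  -- parameters
  set u : ℝ := B * r / C ^ 2 with hu
  have hu0 : 0 ≤ u := by positivity
  set l : ℝ := Real.log (1 + u) / B with hl
  have hl0 : 0 ≤ l := div_nonneg (Real.log_nonneg (by linarith)) hB.le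
  set G : ℝ := (Real.exp (l * B) - 1 - l * B) / B ^ 2 with hG
  have hG0 : 0 ≤ G := by
    have := Real.add_one_le_exp (l * B)
    exact div_nonneg (by linarith) (by positivity)
  set V : ℕ → Ω → ℝ := fun t ω =>
    ∑ i ∈ Finset.Icc 1 t, σ i ω ^ 2 * ‖Qinv i ω (X i ω)‖ ^ 2 with hV
  have hV0 : ∀ t ω, 0 ≤ V t ω := fun t ω => Finset.sum_nonneg fun i _ => by positivity
  have hVm : ∀ t < n, StronglyMeasurable[ℱ t] (V (t + 1)) := by
    intro t ht
    refine Finset.stronglyMeasurable_fun_sum _ fun i hi => ?_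
    rw [Finset.mem_Icc] at hi
    refine StronglyMeasurable.mul
      (((hσmeas i hi.1 (by omega)).mono (ℱ.mono (by omega))).pow 2) (StronglyMeasurable.pow ?_ 2)
    exact aux_meas_norm (fun j h1 h2 => hXm t j h1 (by omega)) (hQpos i) (hQsq i) (hQinv i)
      (hXm t i hi.1 hi.2)
  have hVm0 : ∀ t ≤ n, StronglyMeasurable[ℱ t] (V t) := by
    intro t ht
    cases t with
    | zero => simpa [hV] using stronglyMeasurable_const
    | succ t => exact (hVm t (by omega)).mono (ℱ.mono (by omega))
  set D : ℕ → Ω → ℝ := fun t ω => Real.exp (-(G * V t ω)) with hD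
  have hD1 : ∀ t ω, D t ω ≤ 1 := fun t ω =>
    Real.exp_le_one_iff.2 (neg_nonpos.2 (mul_nonneg hG0 (hV0 t ω)))
  have hDpos : ∀ t ω, 0 < D t ω := fun t ω => Real.exp_pos _
  have hDc : Continuous (fun x : ℝ => Real.exp (-(G * x))) := by fun_prop
  set Z : ℕ → Ω → ℝ := fun t ω => Real.cosh (l * ‖Qinv t ω (N t ω)‖) * D t ω with hZ
  have hcm : Continuous (fun x : ℝ => Real.cosh (l * x)) := by fun_prop
  have hYm : ∀ t, StronglyMeasurable[ℱ t] (fun ω => ‖Qinv t ω (N t ω)‖) := fun t =>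
    aux_meas_norm (fun j h1 h2 => hXm t j h1 (by omega)) (hQpos t) (hQsq t) (hQinv t) (hNm t)
  have hcosh : ∀ a b : ℝ, 0 ≤ a → a ≤ b → Real.cosh (l * a) ≤ Real.cosh (l * b) := by
    intro a b ha hab
    rw [Real.cosh_le_cosh, abs_of_nonneg (by positivity),
      abs_of_nonneg (mul_nonneg hl0 (ha.trans hab))]
    gcongr
  have hZi : ∀ t ≤ n, Integrable (Z t) μ := by
    intro t ht
    refine Integrable.of_bound (((hcm.comp_stronglyMeasurable (hYm t)).mul
      (hDc.comp_stronglyMeasurable (hVm0 t ht))).mono (ℱ.le t)).aestronglyMeasurable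
      (Real.cosh (l * (t * B))) ?_
    filter_upwards [hYb t ht] with ω h
    have h1 := hcosh _ _ (norm_nonneg _) h
    have h2 := hD1 t ω
    have h3 := (hDpos t ω).le
    have h4 := (Real.cosh_pos (l * ‖Qinv t ω (N t ω)‖)).le
    rw [Real.norm_eq_abs, abs_of_nonneg (by positivity)]
    nlinarith
  set θ : ℝ := Real.cosh (l * r) * Real.exp (-(G * C ^ 2)) with hθd
  have hmax := aux_maximal (μ := μ) ℱ n Z (fun t => {ω | r ≤ ‖Qinv t ω (N t ω)‖}) hZi
    (fun t ω => by have := hDpos t ω; have := Real.cosh_pos (l * ‖Qinv t ω (N t ω)‖); positivity)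
    (fun t _ => measurableSet_le measurable_const (hYm t).measurable) θ
    (by
      intro t ht
      filter_upwards [hCn] with ω h hω
      have hVle : V t ω ≤ C ^ 2 := by
        refine le_trans ?_ h
        exact Finset.sum_le_sum_of_subset_of_nonneg (Finset.Icc_subset_Icc le_rfl ht)
          fun i _ _ => by positivity
      simp only [hθd, hZ, hD]
      have := hcosh _ _ hr hω
      have := Real.cosh_pos (l * ‖Qinv t ω (N t ω)‖)
      gcongr)
    (by
      intro t ht A hA
      have hx : StronglyMeasurable[ℱ t] (fun ω => ‖Qinv (t + 1) ω (N t ω)‖) :=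
        aux_meas_norm (fun j h1 h2 => hXm t j h1 h2) (hQpos _) (hQsq _) (hQinv _) (hNm t)
      have hgm : StronglyMeasurable[ℱ t] (fun ω => ‖Qinv (t + 1) ω (X (t + 1) ω)‖) :=
        aux_meas_norm (fun j h1 h2 => hXm t j h1 h2) (hQpos _) (hQsq _) (hQinv _)
          (hXm t (t + 1) (by omega) le_rfl)
      have hi : StronglyMeasurable[ℱ t] (fun ω => ⟪Qinv (t + 1) ω (N t ω),
          Qinv (t + 1) ω (X (t + 1) ω)⟫) :=
        aux_meas_inner (fun j h1 h2 => hXm t j h1 h2) (hQpos _) (hQsq _) (hQinv _) (hNm t)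
          (hXm t (t + 1) (by omega) le_rfl)
      have hDm : StronglyMeasurable[ℱ t] (D (t + 1)) := hDc.comp_stronglyMeasurable (hVm t ht)
      have hcx : StronglyMeasurable[ℱ t] (fun ω => Real.cosh (l * ‖Qinv (t + 1) ω (N t ω)‖)) :=
        hcm.comp_stronglyMeasurable hx
      have hsx : StronglyMeasurable[ℱ t] (fun ω => Real.sinh (l * ‖Qinv (t + 1) ω (N t ω)‖) /
          (l * ‖Qinv (t + 1) ω (N t ω)‖)) := by
        have hlx := hx.const_mul l
        exact (Real.continuous_sinh.comp_stronglyMeasurable hlx).div hlx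
      set c0 := Real.cosh (l * (t * B)) with hc0
      have hc0p : 0 < c0 := Real.cosh_pos _
      have hxb : ∀ᵐ ω ∂μ, Real.cosh (l * ‖Qinv (t + 1) ω (N t ω)‖) ≤ c0 := by
        filter_upwards [hYb t ht.le] with ω h
        exact hcosh _ _ (norm_nonneg _) ((hmono t ω _).trans h)
      refine aux_step (ℱ.le t) (e := ε (t + 1)) (s := fun ω => σ (t + 1) ω ^ 2)
        (P := fun ω => D (t + 1) ω * Real.cosh (l * ‖Qinv (t + 1) ω (N t ω)‖))
        (K := fun ω => D (t + 1) ω * (Real.sinh (l * ‖Qinv (t + 1) ω (N t ω)‖) /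
          (l * ‖Qinv (t + 1) ω (N t ω)‖) * (l ^ 2 * ⟪Qinv (t + 1) ω (N t ω),
          Qinv (t + 1) ω (X (t + 1) ω)⟫)))
        (R := fun ω => D (t + 1) ω * (G * Real.cosh (l * ‖Qinv (t + 1) ω (N t ω)‖) *
          ‖Qinv (t + 1) ω (X (t + 1) ω)‖ ^ 2))
        (B := B) (c := c0 + c0 * l + G * c0)
        (hεint _ (by omega)) (hε0 (t + 1) (by omega)) (hbdd _ (by omega) ht) ?_
        (hDm.mul hcx) (hDm.mul (hsx.mul (hi.const_mul _)))
        (hDm.mul ((hcx.const_mul G).mul (hgm.pow 2)))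
        ?_ ?_ ?_ ?_ (hZi (t + 1) ht) (hZi t ht.le) ?_ ?_ hA
      · have h := hvar (t + 1) (by omega) ht
        have h' : μ[fun ω => (ε (t + 1) ω - (μ[ε (t + 1) | ℱ (t + 1 - 1)]) ω) ^ 2 |
            ℱ (t + 1 - 1)] =ᵐ[μ] μ[fun ω => ε (t + 1) ω ^ 2 | ℱ (t + 1 - 1)] := by
          refine condExp_congr_ae ?_
          filter_upwards [hε0 (t + 1) (by omega)] with ω h
          rw [h]; simp
        exact h'.symm.le.trans h
      · filter_upwards [hxb] with ω h
        have h2 := hD1 (t + 1) ω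
        have h3 := hDpos (t + 1) ω
        have h4 := Real.cosh_pos (l * ‖Qinv (t + 1) ω (N t ω)‖)
        rw [Real.norm_eq_abs, abs_of_nonneg (by positivity)]
        have : 0 ≤ c0 * l + G * c0 := by positivity
        nlinarith
      · filter_upwards [hxb] with ω h
        have h2 := hD1 (t + 1) ω
        have h3 := hDpos (t + 1) ω
        have h5 := aux_Kbound (Qinv (t + 1) ω (N t ω)) (Qinv (t + 1) ω (X (t + 1) ω)) l hl0
          (hg1 t ω)
        rw [Real.norm_eq_abs, abs_mul, abs_of_pos h3]
        have h6 := mul_le_mul_of_nonneg_right h hl0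
        have h7 := mul_le_mul h2 (h5.trans h6) (abs_nonneg _) zero_le_one
        have : 0 ≤ G * c0 := by positivity
        linarith
      · filter_upwards [hxb] with ω h
        have h2 := hD1 (t + 1) ω
        have h3 := hDpos (t + 1) ω
        have h4 := Real.cosh_pos (l * ‖Qinv (t + 1) ω (N t ω)‖)
        have h5 : ‖Qinv (t + 1) ω (X (t + 1) ω)‖ ^ 2 ≤ 1 :=
          pow_le_one₀ (norm_nonneg _) (hg1 t ω)
        rw [Real.norm_eq_abs, abs_of_nonneg (by positivity)]
        have h7 : D (t + 1) ω * (G * Real.cosh (l * ‖Qinv (t + 1) ω (N t ω)‖) *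
          ‖Qinv (t + 1) ω (X (t + 1) ω)‖ ^ 2) ≤ 1 * (G * c0 * 1) := by gcongr
        have : 0 ≤ c0 * l := by positivity
        linarith
      · intro ω
        have h3 := hDpos (t + 1) ω
        have h4 := Real.cosh_pos (l * ‖Qinv (t + 1) ω (N t ω)‖)
        positivity
      · filter_upwards [hbdd (t + 1) (by omega) ht] with ω h
        have h5 := aux_point (Qinv (t + 1) ω (N t ω)) (Qinv (t + 1) ω (X (t + 1) ω)) l B
          (ε (t + 1) ω) hl0 hB h (hg1 t ω)
        rw [← hYs, ← hG] at h5
        have h6 := mul_le_mul_of_nonneg_left h5 (hDpos (t + 1) ω).le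
        simp only [hZ]
        linarith
      · refine Eventually.of_forall fun ω => ?_
        have h1 : V (t + 1) ω = V t ω +
            σ (t + 1) ω ^ 2 * ‖Qinv (t + 1) ω (X (t + 1) ω)‖ ^ 2 := by
          simp only [hV]
          rw [Finset.sum_Icc_succ_top (by omega)]
        set q := σ (t + 1) ω ^ 2 * ‖Qinv (t + 1) ω (X (t + 1) ω)‖ ^ 2 with hq
        have h2 : D (t + 1) ω * (1 + G * q) ≤ D t ω := by
          have h3 : D (t + 1) ω * Real.exp (G * q) = D t ω := by
            simp only [hD]
            rw [h1, ← Real.exp_add]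
            congr 1; ring
          rw [← h3]
          have := Real.add_one_le_exp (G * q)
          exact mul_le_mul_of_nonneg_left (by linarith) (hDpos _ _).le
        have h4 := Real.cosh_pos (l * ‖Qinv (t + 1) ω (N t ω)‖)
        have h5 := hcosh _ _ (norm_nonneg _) (hmono t ω (N t ω))
        calc _ = Real.cosh (l * ‖Qinv (t + 1) ω (N t ω)‖) * (D (t + 1) ω * (1 + G * q)) := by
              rw [hq]; ring
          _ ≤ Real.cosh (l * ‖Qinv t ω (N t ω)‖) * D t ω :=
              mul_le_mul h5 h2 (by have := hDpos (t + 1) ω; positivity)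
                (Real.cosh_pos _).le)
  have hZ0 : ∫ ω, Z 0 ω ∂μ = 1 := by
    simp [hZ, hD, hV, hN]
  rw [hZ0] at hmax
  have hθ : Real.exp (C ^ 2 / B ^ 2 * ((1 + u) * Real.log (1 + u) - u)) / 2 ≤ θ := by
    have h1 : Real.exp (l * r) / 2 ≤ Real.cosh (l * r) := by
      rw [Real.cosh_eq]
      have := Real.exp_pos (-(l * r))
      linarith
    have h2 : l * B = Real.log (1 + u) := div_mul_cancel₀ _ hB.ne'
    have h3 : C ^ 2 / B ^ 2 * ((1 + u) * Real.log (1 + u) - u) = l * r + -(G * C ^ 2) := by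
      rw [hG, h2, Real.exp_log (by linarith), hl]
      have hru : r = u * C ^ 2 / B := by rw [hu]; field_simp
      rw [hru]
      field_simp
      ring
    rw [h3, Real.exp_add, hθd]
    have := Real.exp_pos (-(G * C ^ 2))
    nlinarith
  refine (measure_mono (t := {ω | ∃ t ≤ n, ω ∈ {ω | r ≤ ‖Qinv t ω (N t ω)‖}}) ?_).trans ?_
  · rintro ω ⟨t, _, h2, h3⟩
    exact ⟨t, h2, h3⟩
  · rw [← ofReal_measureReal]
    refine ENNReal.ofReal_le_ofReal ?_
    rw [neg_mul, Real.exp_neg]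
    set T := Real.exp (C ^ 2 / B ^ 2 * ((1 + u) * Real.log (1 + u) - u)) with hT
    have hTp : 0 < T := Real.exp_pos _
    rw [← div_eq_mul_inv, le_div_iff₀ hTp]
    have := mul_le_mul_of_nonneg_right hθ
      (measureReal_nonneg (μ := μ) (s := {ω | ∃ t ≤ n, ω ∈ {ω | r ≤ ‖Qinv t ω (N t ω)‖}}))
    linarith
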